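/- arXiv:1801.02046 — 3 statements merged into one kernel-verified Lean document; each statement's English description precedes it below -/
import Mathlib

section
/- Let L be a finite first-order language having only function symbols, let n ∈ ℕ, and let K be a finite set of finite L-algebras each of which is generated by at most n elements. Then a quasi-identity Σ ⇒ φ ≈ ψ is admissible in K if and only if the following holds: for every substitution σ assigning to each variable an L-term in the fixed variables x₁, …, xₙ, if σ(φ') ≈ σ(ψ') is valid in K for all φ' ≈ ψ' ∈ Σ, then σ(φ) ≈ σ(ψ) is valid in K. (The latter condition expresses validity of the quasi-identity in the free algebra of the quasivariety generated by K on n generators.) -/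
/-!
Validity of identities is stable under substitution, so it suffices to relate substitutions into
terms over `ℕ` with substitutions into terms over `Fin n`, one evaluation at a time.

From `Fin n` to `ℕ`: rename the variables along `Fin n ↪ ℕ`. An assignment `Fin n → A` extends to
an assignment `ℕ → A` because `A` is nonempty: it contains a value of the term `s 0`. This covers
the case `n = 0`, where `A` could be empty a priori.

From `ℕ` to `Fin n`: given an assignment `v : ℕ → A`, write each `v i` as the value of a term `t i`
at a generating `n`-tuple `g` of `A`. Composing the substitution with `t` gives terms over `Fin n`,
and the resulting conclusion, evaluated at `g`, is the original conclusion evaluated at `v`.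
-/

/-- A signature (first-order language with only function symbols). -/
structure Signature where
  ops : Type
  arity : ops → ℕ

/-- An algebra (structure) for a signature. -/
structure SigAlg (σ : Signature) where
  carrier : Type
  interp : ∀ o : σ.ops, (Fin (σ.arity o) → carrier) → carrier

/-- Terms over a set `V` of variables. -/
inductive SigTerm (σ : Signature) (V : Type) : Type
  | var : V → SigTerm σ V
  | op : ∀ o : σ.ops, (Fin (σ.arity o) → SigTerm σ V) → SigTerm σ V

/-- Evaluation of a term in an algebra under an assignment of variables. -/
def SigTerm.eval {σ : Signature} {V : Type} (A : SigAlg σ) (v : V → A.carrier) :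
    SigTerm σ V → A.carrier
  | .var x => v x
  | .op o args => A.interp o (fun i => (args i).eval A v)

/-- Substitution of terms for variables. -/
def SigTerm.subst {σ : Signature} {V W : Type} (s : V → SigTerm σ W) :
    SigTerm σ V → SigTerm σ W
  | .var x => s x
  | .op o args => .op o (fun i => (args i).subst s)

/-- Validity of an identity `φ ≈ ψ` in a class `K` of algebras. -/
def IdValid {σ : Signature} (K : Set (SigAlg σ)) {V : Type} (φ ψ : SigTerm σ V) : Prop :=
  ∀ A ∈ K, ∀ v : V → A.carrier, φ.eval A v = ψ.eval A v

/-- Admissibility of the quasi-identity `Γ ⇒ φ ≈ ψ` in a class `K` of algebras: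
for every substitution, if all substituted premises are valid in `K`,
so is the substituted conclusion. -/
def Admissible {σ : Signature} (K : Set (SigAlg σ))
    (Γ : List (SigTerm σ ℕ × SigTerm σ ℕ)) (φ ψ : SigTerm σ ℕ) : Prop :=
  ∀ s : ℕ → SigTerm σ ℕ,
    (∀ p ∈ Γ, IdValid K (p.1.subst s) (p.2.subst s)) →
    IdValid K (φ.subst s) (ψ.subst s)

/-- The substitution lemma: evaluating a substituted term amounts to evaluating the term under the
assignment given by the values of the substituted terms. -/
theorem SigTerm.eval_subst {σ : Signature} {V W : Type} (A : SigAlg σ) (s : V → SigTerm σ W)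
    (v : W → A.carrier) (t : SigTerm σ V) :
    (t.subst s).eval A v = t.eval A (fun x => (s x).eval A v) := by
  induction t with
  | var x => rfl
  | op o args ih => simp only [SigTerm.subst, SigTerm.eval, ih]

theorem SigTerm.subst_subst {σ : Signature} {U V W : Type} (s : U → SigTerm σ V)
    (r : V → SigTerm σ W) (t : SigTerm σ U) :
    (t.subst s).subst r = t.subst (fun x => (s x).subst r) := by
  induction t with
  | var x => rfl
  | op o args ih => simp only [SigTerm.subst, ih]

theorem IdValid.subst {σ : Signature} {K : Set (SigAlg σ)} {V W : Type} {φ ψ : SigTerm σ V}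
    (h : IdValid K φ ψ) (s : V → SigTerm σ W) : IdValid K (φ.subst s) (ψ.subst s) := by
  intro A hA v
  simpa only [SigTerm.eval_subst] using h A hA _

theorem statement1 (σ : Signature) (hσ : Finite σ.ops) (n : ℕ)
    (K : Set (SigAlg σ)) (hKfin : K.Finite)
    (hfin : ∀ A ∈ K, Finite A.carrier)
    (hgen : ∀ A ∈ K, ∃ g : Fin n → A.carrier,
      ∀ a : A.carrier, ∃ t : SigTerm σ (Fin n), t.eval A g = a)
    (Γ : List (SigTerm σ ℕ × SigTerm σ ℕ)) (φ ψ : SigTerm σ ℕ) :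
    Admissible K Γ φ ψ ↔
      ∀ s : ℕ → SigTerm σ (Fin n),
        (∀ p ∈ Γ, IdValid K (p.1.subst s) (p.2.subst s)) →
        IdValid K (φ.subst s) (ψ.subst s) := by
  constructor
  · intro h s hs A hA v
    -- The value of `s 0` shows that `A` is nonempty, even for `n = 0`.
    let w : ℕ → A.carrier := fun i => if hi : i < n then v ⟨i, hi⟩ else (s 0).eval A v
    let e : Fin n → SigTerm σ ℕ := fun j => .var (j : ℕ)
    have hw : (fun j => (e j).eval A w) = v := by
      funext j
      simp [w, e, SigTerm.eval]
    have key := h (fun x => (s x).subst e) (fun p hp => by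
      simpa only [SigTerm.subst_subst] using (hs p hp).subst e) A hA w
    simpa only [← SigTerm.subst_subst, SigTerm.eval_subst _ e, hw] using key
  · intro h s hs A hA v
    obtain ⟨g, hg⟩ := hgen A hA
    choose t ht using fun i => hg (v i)
    have key := h (fun x => (s x).subst t) (fun p hp => by
      simpa only [SigTerm.subst_subst] using (hs p hp).subst t) A hA g
    simpa only [← SigTerm.subst_subst, SigTerm.eval_subst _ t, ht] using key
end

section
/- Let L be a finite first-order language having only function symbols, let K be a finite set of finite L-algebras and Q = ISP(K), and let {A₁, …, Aₙ} be a finite set of finite Q-subdirectly irreducible algebras with ISP(A₁, …, Aₙ) = Q and A_i not isomorphic to a subalgebra of A_j for all i ≠ j. Then: (a) for every finite set {B₁, …, B_k} of finite L-algebras with ISP(B₁, …, B_k) = Q, one has [|A₁|, …, |Aₙ|] ≤_m [|B₁|, …, |B_k|] in the multiset ordering; and (b) if {B₁, …, B_k} moreover also consists of Q-subdirectly irreducible algebras no one of which embeds into another, then k = n and, after reindexing, B_i ≅ A_i for each i. That is, {A₁, …, Aₙ} is, up to isomorphism, the unique minimal generating set for Q. -/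
/-- `f` is a homomorphism from `A` to `B`. -/
def SigHom {σ : Signature} (A B : SigAlg σ) (f : A.carrier → B.carrier) : Prop :=
  ∀ (o : σ.ops) (args : Fin (σ.arity o) → A.carrier),
    f (A.interp o args) = B.interp o (fun i => f (args i))

/-- The product algebra of a family, with pointwise operations. -/
def prodAlg {σ : Signature} {I : Type} (B : I → SigAlg σ) : SigAlg σ where
  carrier := ∀ i, (B i).carrier
  interp := fun o args i => (B i).interp o (fun j => args j i)

/-- `A` is isomorphic to a subalgebra of a product of members of `K`. -/
def ISP {σ : Signature} (K : Set (SigAlg σ)) : Set (SigAlg σ) :=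
  { A | ∃ (I : Type) (B : I → SigAlg σ), (∀ i, B i ∈ K) ∧
      ∃ f : A.carrier → (prodAlg B).carrier,
        SigHom A (prodAlg B) f ∧ Function.Injective f }

/-- `A` embeds into `B` (is isomorphic to a subalgebra of `B`). -/
def Embeds {σ : Signature} (A B : SigAlg σ) : Prop :=
  ∃ f : A.carrier → B.carrier, SigHom A B f ∧ Function.Injective f

/-- `A` is `Q`-subdirectly irreducible: `A ∈ Q`, and whenever `A` embeds into a
product of members of `Q` with all composites with projections surjective,
some composite with a projection is an isomorphism. -/
def QSI {σ : Signature} (Q : Set (SigAlg σ)) (A : SigAlg σ) : Prop :=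
  A ∈ Q ∧
    ∀ (I : Type) (B : I → SigAlg σ), (∀ i, B i ∈ Q) →
      ∀ e : A.carrier → (prodAlg B).carrier,
        SigHom A (prodAlg B) e → Function.Injective e →
        (∀ i, Function.Surjective (fun a => e a i)) →
        ∃ i, Function.Bijective (fun a => e a i)

/-- `A` is isomorphic to `B`. -/
def IsoAlg {σ : Signature} (A B : SigAlg σ) : Prop :=
  ∃ f : A.carrier → B.carrier, SigHom A B f ∧ Function.Bijective f

/-- The Dershowitz–Manna multiset ordering (induced by the usual order on `ℕ`):
`N ≤ₘ N'` iff for every `x` whose multiplicity in `N` exceeds its multiplicity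
in `N'`, there exists `y > x` whose multiplicity in `N'` exceeds that in `N`. -/
def MultisetLE (N N' : Multiset ℕ) : Prop :=
  ∀ x : ℕ, N'.count x < N.count x → ∃ y : ℕ, x < y ∧ N.count y < N'.count y

theorem SigHom.comp {σ : Signature} {A B C : SigAlg σ} {g : B.carrier → C.carrier}
    {f : A.carrier → B.carrier} (hg : SigHom B C g) (hf : SigHom A B f) :
    SigHom A C (g ∘ f) := fun o args => by
  simp only [Function.comp_apply, hf o args, hg o]

theorem Embeds.trans {σ : Signature} {A B C : SigAlg σ} (h : Embeds A B) (h' : Embeds B C) :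
    Embeds A C := by
  obtain ⟨f, hf, hfi⟩ := h
  obtain ⟨g, hg, hgi⟩ := h'
  exact ⟨g ∘ f, hg.comp hf, hgi.comp hfi⟩

theorem Embeds.card_le {σ : Signature} {A B : SigAlg σ} (h : Embeds A B) [Finite B.carrier] :
    Nat.card A.carrier ≤ Nat.card B.carrier := by
  obtain ⟨f, -, hf⟩ := h
  exact Nat.card_le_card_of_injective f hf

theorem Embeds.isoAlg_of_card_le {σ : Signature} {A B : SigAlg σ} (h : Embeds A B)
    [Finite B.carrier] (hc : Nat.card B.carrier ≤ Nat.card A.carrier) : IsoAlg A B := by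
  obtain ⟨f, hf, hfi⟩ := h
  exact ⟨f, hf, hfi.bijective_of_nat_card_le hc⟩

theorem IsoAlg.symm {σ : Signature} {A B : SigAlg σ} (h : IsoAlg A B) : IsoAlg B A := by
  obtain ⟨f, hf, hb⟩ := h
  refine ⟨(Equiv.ofBijective f hb).symm, fun o args => ?_, (Equiv.ofBijective f hb).symm.bijective⟩
  rw [Equiv.symm_apply_eq, Equiv.ofBijective_apply, hf o]
  congr 1
  funext i
  exact ((Equiv.ofBijective f hb).apply_symm_apply (args i)).symm

theorem IsoAlg.embeds {σ : Signature} {A B : SigAlg σ} (h : IsoAlg A B) : Embeds A B := by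
  obtain ⟨f, hf, hb⟩ := h
  exact ⟨f, hf, hb.injective⟩

/-- The image of a homomorphism, as a subalgebra of its codomain. -/
def imageAlg {σ : Signature} {A B : SigAlg σ} (f : A.carrier → B.carrier) (hf : SigHom A B f) :
    SigAlg σ where
  carrier := Set.range f
  interp := fun o args => ⟨B.interp o fun i => (args i).1, by
    choose a ha using fun i => (args i).2
    exact ⟨A.interp o a, by simp only [hf o, ha]⟩⟩

theorem imageAlg_embeds {σ : Signature} {A B : SigAlg σ} (f : A.carrier → B.carrier)
    (hf : SigHom A B f) : Embeds (imageAlg f hf) B :=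
  ⟨Subtype.val, fun _ _ => rfl, Subtype.val_injective⟩

theorem Embeds.mem_ISP {σ : Signature} {A B : SigAlg σ} {K : Set (SigAlg σ)} (h : Embeds A B)
    (hB : B ∈ K) : A ∈ ISP K := by
  obtain ⟨f, hf, hfi⟩ := h
  refine ⟨Unit, fun _ => B, fun _ => hB, fun a _ => f a, fun o args => ?_, fun a b hab => ?_⟩
  · funext _
    exact hf o args
  · exact hfi (congrFun hab ())

/-- A `Q`-subdirectly irreducible algebra embeds into a member of any class generating `Q`. -/
theorem QSI.exists_embeds {σ : Signature} {K : Set (SigAlg σ)} {A : SigAlg σ}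
    (h : QSI (ISP K) A) : ∃ B ∈ K, Embeds A B := by
  obtain ⟨⟨I, B, hB, f, hf, hfi⟩, hSI⟩ := h
  have hp : ∀ i, SigHom A (B i) fun a => f a i := fun i o args => congrFun (hf o args) i
  obtain ⟨i, hi⟩ := hSI I (fun i => imageAlg _ (hp i))
    (fun i => (imageAlg_embeds _ (hp i)).mem_ISP (hB i))
    (fun a i => ⟨f a i, a, rfl⟩)
    (fun o args => by
      funext i
      exact Subtype.ext (hp i o args))
    (fun a b hab => hfi (funext fun i => congrArg Subtype.val (congrFun hab i)))
    (fun i => by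
      rintro ⟨_, a, rfl⟩
      exact ⟨a, rfl⟩)
  exact ⟨B i, hB i, fun a => f a i, hp i,
    fun a b hab => hi.injective (Subtype.ext hab)⟩

theorem QSI.exists_embeds_range {σ : Signature} {K : Set (SigAlg σ)} {A : SigAlg σ}
    (h : QSI (ISP K) A) {k : ℕ} {B : Fin k → SigAlg σ} (hB : ISP (Set.range B) = ISP K) :
    ∃ j, Embeds A (B j) := by
  rw [← hB] at h
  obtain ⟨_, ⟨j, rfl⟩, hj⟩ := h.exists_embeds
  exact ⟨j, hj⟩

theorem count_ofFn {n : ℕ} (s : Fin n → ℕ) (z : ℕ) :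
    (↑(List.ofFn s) : Multiset ℕ).count z = (Finset.univ.filter fun i => s i = z).card := by
  rw [← Fin.univ_val_map, Multiset.count_map, Finset.card_def, Finset.filter_val]
  simp only [eq_comm]

/-- If no `A i` embeds into another one and each embeds into some finite `B j`, the sizes of the
`A i` are below those of the `B j` in the multiset order. -/
theorem multisetLE_of_embeds {σ : Signature} {n k : ℕ} {A : Fin n → SigAlg σ}
    {B : Fin k → SigAlg σ} (hAemb : ∀ i j : Fin n, i ≠ j → ¬ Embeds (A i) (A j))
    (hBfin : ∀ j, Finite (B j).carrier) (f : Fin n → Fin k)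
    (hf : ∀ i, Embeds (A i) (B (f i))) :
    MultisetLE (↑(List.ofFn fun i => Nat.card (A i).carrier))
      (↑(List.ofFn fun i => Nat.card (B i).carrier)) := by
  intro x hx
  by_contra! hcon
  simp only [count_ofFn] at hx hcon
  set a : Fin n → ℕ := fun i => Nat.card (A i).carrier with ha
  set b : Fin k → ℕ := fun j => Nat.card (B j).carrier with hb
  have hab : ∀ i, a i ≤ b (f i) := fun i => (hf i).card_le
  have hiso : ∀ i, b (f i) = a i → Embeds (B (f i)) (A i) := fun i h =>
    ((hf i).isoAlg_of_card_le h.le).symm.embeds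
  have hinj : ∀ z, Set.InjOn f {i | a i = z ∧ b (f i) = z} := by
    rintro z i ⟨-, -⟩ i' ⟨h1, h2⟩ hii
    by_contra hne
    refine hAemb i i' hne ((hf i).trans ?_)
    rw [hii]
    exact hiso i' (h2.trans h1.symm)
  have hle : ∀ z, (∀ i, a i = z → b (f i) = z) →
      (Finset.univ.filter fun i => a i = z).card ≤
        (Finset.univ.filter fun j => b j = z).card := fun z h =>
    Finset.card_le_card_of_injOn f (fun i hi => by simpa using h i (by simpa using hi))
      (fun i hi i' hi' => hinj z ⟨by simpa using hi, h i (by simpa using hi)⟩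
        ⟨by simpa using hi', h i' (by simpa using hi')⟩)
  -- `f` preserves every size from `x` upwards; the induction descends from the largest size.
  have key : ∀ d z, (∑ j, b j) - z = d → x ≤ z → ∀ i, a i = z → b (f i) = z := by
    intro d
    induction d using Nat.strong_induction_on with
    | _ d ih =>
      intro z hd hxz i hi
      by_contra hne
      have hlt : z < b (f i) := lt_of_le_of_ne (hi ▸ hab i) (Ne.symm hne)
      have hsum : b (f i) ≤ ∑ j, b j :=
        Finset.single_le_sum (f := b) (fun _ _ => Nat.zero_le _) (Finset.mem_univ _)
      have hw := ih _ (by omega) (b (f i)) rfl (by omega)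
      -- By counting, `f` is onto the `B j` of size `b (f i)`, so `B (f i)` is a copy of some `A i'`.
      obtain ⟨i', hi', hfi'⟩ := Finset.surjOn_of_injOn_of_card_le
        (s := Finset.univ.filter fun i' => a i' = b (f i))
        (t := Finset.univ.filter fun j => b j = b (f i)) f
        (fun i' h => by simpa using hw i' (by simpa using h))
        (fun i₁ h₁ i₂ h₂ => hinj _ ⟨by simpa using h₁, hw i₁ (by simpa using h₁)⟩
          ⟨by simpa using h₂, hw i₂ (by simpa using h₂)⟩)
        (hcon _ (by omega)) (show f i ∈ _ by simp)
      have hai' : a i' = b (f i) := by simpa using hi'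
      refine hAemb i i' (by rintro rfl; omega) ((hf i).trans ?_)
      rw [← hfi']
      exact hiso i' (by rw [hfi', hai'])
  exact absurd (hle x (key _ x rfl le_rfl)) (not_le.mpr hx)

theorem statement3 (σ : Signature) (hσ : Finite σ.ops)
    (K : Set (SigAlg σ)) (hKfin : K.Finite)
    (hfin : ∀ A ∈ K, Finite A.carrier)
    (n : ℕ) (A : Fin n → SigAlg σ)
    (hAfin : ∀ i, Finite (A i).carrier)
    (hASI : ∀ i, QSI (ISP K) (A i))
    (hAgen : ISP (Set.range A) = ISP K)
    (hAemb : ∀ i j : Fin n, i ≠ j → ¬ Embeds (A i) (A j)) :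
    -- (a) minimality in the multiset ordering
    (∀ (k : ℕ) (B : Fin k → SigAlg σ),
      (∀ i, Finite (B i).carrier) →
      ISP (Set.range B) = ISP K →
      MultisetLE (↑(List.ofFn fun i => Nat.card (A i).carrier))
        (↑(List.ofFn fun i => Nat.card (B i).carrier))) ∧
    -- (b) uniqueness up to isomorphism
    (∀ (k : ℕ) (B : Fin k → SigAlg σ),
      (∀ i, Finite (B i).carrier) →
      (∀ i, QSI (ISP K) (B i)) →
      (∀ i j : Fin k, i ≠ j → ¬ Embeds (B i) (B j)) →
      ISP (Set.range B) = ISP K →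
      k = n ∧ ∃ e : Fin n ≃ Fin k, ∀ i : Fin n, IsoAlg (B (e i)) (A i)) := by
  refine ⟨fun k B hBfin hB => ?_, fun k B hBfin hBSI hBemb hB => ?_⟩
  · choose f hf using fun i => (hASI i).exists_embeds_range hB
    exact multisetLE_of_embeds hAemb hBfin f hf
  · choose f hf using fun i => (hASI i).exists_embeds_range hB
    choose g hg using fun j => (hBSI j).exists_embeds_range hAgen
    have hgf : ∀ i, g (f i) = i := fun i => by
      by_contra hne
      exact hAemb _ _ (Ne.symm hne) ((hf i).trans (hg (f i)))
    have hfg : ∀ j, f (g j) = j := fun j => by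
      by_contra hne
      exact hBemb _ _ (Ne.symm hne) ((hg j).trans (hf (g j)))
    let e : Fin n ≃ Fin k := ⟨f, g, hgf, hfg⟩
    refine ⟨(Fin.equiv_iff_eq.mp ⟨e⟩).symm, e, fun i => ?_⟩
    have hback : Embeds (B (f i)) (A i) := by
      have h := hg (f i)
      rwa [hgf] at h
    exact hback.isoAlg_of_card_le (hf i).card_le
end

section
/- The free double Stone algebra on two generators has exactly 7776 elements; equivalently, the quotient of the set of {∧, ∨, *, ⁺, 0, 1}-terms in two fixed variables by the equivalence relation 't ~ s iff t and s evaluate to the same element of dS under every assignment of the two variables into dS' has exactly 7776 equivalence classes. -/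
/-!
Two elements of `dS` are put in the same class when they agree under `*` and `⁺`; the classes are
`{0}`, `{a, b}` and `{1}`, so the assignments of two variables split into nine blocks.
Membership in a class is expressed by a term, so terms can be chosen independently on the blocks
and glued (`eval_sel`). On one block, `*` and `⁺` only produce the constants `0` and `1`, hence
every term agrees there with an element of the bounded lattice generated by `x` and `y`, that is,
with one of `0, 1, x, y, x ∧ y, x ∨ y` (`restrict_mem`). The free algebra is therefore the product
over the blocks of the sets of restrictions of these six functions. These sets have 2 elements on
the four blocks `(i, j)` with `i, j ∈ {0, 1}`, 3 elements on the four blocks where exactly one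
variable lies in `{a, b}`, and 6 on the remaining block, and `2⁴ * 3⁴ * 6 = 7776`.
-/

/-- Terms in the language {∧, ∨, *, ⁺, 0, 1} over a set `V` of variables. -/
inductive DSTerm (V : Type) : Type
  | var : V → DSTerm V
  | meet : DSTerm V → DSTerm V → DSTerm V
  | join : DSTerm V → DSTerm V → DSTerm V
  | star : DSTerm V → DSTerm V   -- pseudocomplement *
  | plus : DSTerm V → DSTerm V   -- dual pseudocomplement ⁺
  | zero : DSTerm V
  | one : DSTerm V

/-- An algebra in the language {∧, ∨, *, ⁺, 0, 1}. -/
structure DSAlg where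
  carrier : Type
  meet : carrier → carrier → carrier
  join : carrier → carrier → carrier
  star : carrier → carrier
  plus : carrier → carrier
  zero : carrier
  one : carrier

/-- Evaluation of a term in an algebra under an assignment of the variables. -/
def DSTerm.eval {V : Type} (A : DSAlg) (v : V → A.carrier) : DSTerm V → A.carrier
  | .var x => v x
  | .meet t s => A.meet (t.eval A v) (s.eval A v)
  | .join t s => A.join (t.eval A v) (s.eval A v)
  | .star t => A.star (t.eval A v)
  | .plus t => A.plus (t.eval A v)
  | .zero => A.zero
  | .one => A.one

/-- Substitution of terms for variables. -/
def DSTerm.subst {V W : Type} (s : V → DSTerm W) : DSTerm V → DSTerm W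
  | .var x => s x
  | .meet t u => .meet (t.subst s) (u.subst s)
  | .join t u => .join (t.subst s) (u.subst s)
  | .star t => .star (t.subst s)
  | .plus t => .plus (t.subst s)
  | .zero => .zero
  | .one => .one

/-- Validity of the identity `φ ≈ ψ` in the algebra `A`. -/
def DSIdValid {V : Type} (A : DSAlg) (φ ψ : DSTerm V) : Prop :=
  ∀ v : V → A.carrier, φ.eval A v = ψ.eval A v

/-- Validity of the quasi-identity `Γ ⇒ φ ≈ ψ` in the algebra `A`. -/
def DSQValid (A : DSAlg) (Γ : List (DSTerm ℕ × DSTerm ℕ)) (φ ψ : DSTerm ℕ) : Prop :=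
  ∀ v : ℕ → A.carrier,
    (∀ p ∈ Γ, p.1.eval A v = p.2.eval A v) → φ.eval A v = ψ.eval A v

/-- Admissibility of the quasi-identity `Γ ⇒ φ ≈ ψ` in the algebra `M`. -/
def DSAdmissible (M : DSAlg) (Γ : List (DSTerm ℕ × DSTerm ℕ)) (φ ψ : DSTerm ℕ) : Prop :=
  ∀ s : ℕ → DSTerm ℕ,
    (∀ p ∈ Γ, DSIdValid M (p.1.subst s) (p.2.subst s)) →
    DSIdValid M (φ.subst s) (ψ.subst s)

/-- dS: the four-element double Stone algebra on the chain 0 < a < b < 1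
(as `Fin 4`), with 0* = 1, x* = 0 for x ≠ 0, 1⁺ = 0, x⁺ = 1 for x ≠ 1. -/
def dSalg : DSAlg := ⟨Fin 4, min, max, ![3, 0, 0, 0], ![3, 3, 3, 0], 0, 3⟩

/-- Two terms in two variables are equivalent iff they evaluate to the same
element of dS under every assignment of the two variables into dS. -/
def freeDS2Setoid : Setoid (DSTerm (Fin 2)) where
  r t s := ∀ v : Fin 2 → Fin 4, t.eval dSalg v = s.eval dSalg v
  iseqv := ⟨fun _ _ => rfl, fun h v => (h v).symm, fun h1 h2 v => (h1 v).trans (h2 v)⟩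

namespace FreeDS2

/-- The term function of `t`, in curried form. -/
def ev (t : DSTerm (Fin 2)) (p q : Fin 4) : Fin 4 := t.eval dSalg ![p, q]

/-- The class of an element of `dS`: `0` for the element `0`, `1` for `a` and `b`, `2` for `1`. -/
def cls : Fin 4 → Fin 3 := ![0, 1, 1, 2]

/-- The six elements of the free bounded distributive lattice on two generators, as terms. -/
def repTerm : Fin 6 → DSTerm (Fin 2) :=
  ![.zero, .one, .var 0, .var 1, .meet (.var 0) (.var 1), .join (.var 0) (.var 1)]

/-- The term functions on `dS` of the terms `repTerm`. -/
def rep (k : Fin 6) (p q : Fin 4) : Fin 4 := ![0, 3, p, q, min p q, max p q] k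

/-- The restriction of a binary function on `dS` to the block `c`, extended by `0` outside of it. -/
def restrict (c : Fin 3 × Fin 3) (f : Fin 4 → Fin 4 → Fin 4) (p q : Fin 4) : Fin 4 :=
  if (cls p, cls q) = c then f p q else 0

/-- The restrictions to the block `c` of the six lattice functions. -/
def locals (c : Fin 3 × Fin 3) : Finset (Fin 4 → Fin 4 → Fin 4) :=
  Finset.univ.image fun k => restrict c (rep k)

lemma ev_repTerm (k : Fin 6) (p q : Fin 4) : ev (repTerm k) p q = rep k p q := by
  fin_cases k <;> rfl

lemma rep_min : ∀ i j, ∃ k, ∀ p q, min (rep i p q) (rep j p q) = rep k p q := by decide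

lemma rep_max : ∀ i j, ∃ k, ∀ p q, max (rep i p q) (rep j p q) = rep k p q := by decide

lemma rep_star : ∀ (c : Fin 3 × Fin 3) (i : Fin 6), ∃ k, ∀ p q, (cls p, cls q) = c →
    dSalg.star (rep i p q) = rep k p q := by
  unfold dSalg; decide

lemma rep_plus : ∀ (c : Fin 3 × Fin 3) (i : Fin 6), ∃ k, ∀ p q, (cls p, cls q) = c →
    dSalg.plus (rep i p q) = rep k p q := by
  unfold dSalg; decide

/-- On each block a term function agrees with one of the six lattice functions. -/
lemma exists_rep (c : Fin 3 × Fin 3) (t : DSTerm (Fin 2)) :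
    ∃ k, ∀ p q, (cls p, cls q) = c → ev t p q = rep k p q := by
  induction t with
  | var x =>
    fin_cases x
    · exact ⟨2, fun _ _ _ => rfl⟩
    · exact ⟨3, fun _ _ _ => rfl⟩
  | zero => exact ⟨0, fun _ _ _ => rfl⟩
  | one => exact ⟨1, fun _ _ _ => rfl⟩
  | meet t s iht ihs =>
    obtain ⟨i, hi⟩ := iht
    obtain ⟨j, hj⟩ := ihs
    obtain ⟨k, hk⟩ := rep_min i j
    refine ⟨k, fun p q h => ?_⟩
    rw [← hk, ← hi p q h, ← hj p q h]; rfl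
  | join t s iht ihs =>
    obtain ⟨i, hi⟩ := iht
    obtain ⟨j, hj⟩ := ihs
    obtain ⟨k, hk⟩ := rep_max i j
    refine ⟨k, fun p q h => ?_⟩
    rw [← hk, ← hi p q h, ← hj p q h]; rfl
  | star t iht =>
    obtain ⟨i, hi⟩ := iht
    obtain ⟨k, hk⟩ := rep_star c i
    refine ⟨k, fun p q h => ?_⟩
    rw [← hk p q h, ← hi p q h]; rfl
  | plus t iht =>
    obtain ⟨i, hi⟩ := iht
    obtain ⟨k, hk⟩ := rep_plus c i
    refine ⟨k, fun p q h => ?_⟩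
    rw [← hk p q h, ← hi p q h]; rfl

lemma restrict_mem (c : Fin 3 × Fin 3) (t : DSTerm (Fin 2)) : restrict c (ev t) ∈ locals c := by
  obtain ⟨k, hk⟩ := exists_rep c t
  refine Finset.mem_image.2 ⟨k, Finset.mem_univ _, ?_⟩
  funext p q
  unfold restrict
  split_ifs with h
  · exact (hk p q h).symm
  · rfl

/-- The term that takes the value of `t i` when `u` takes a value in the class `i`. The terms
`u*`, `u** ∧ u⁺` and `u⁺*` are the indicators of the three classes. -/
def sel (u : DSTerm (Fin 2)) (t : Fin 3 → DSTerm (Fin 2)) : DSTerm (Fin 2) :=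
  .join (.meet (.star u) (t 0))
    (.join (.meet (.meet (.star (.star u)) (.plus u)) (t 1)) (.meet (.star (.plus u)) (t 2)))

lemma eval_sel (u : DSTerm (Fin 2)) (t : Fin 3 → DSTerm (Fin 2)) (p q : Fin 4) :
    ev (sel u t) p q = ev (t (cls (ev u p q))) p q := by
  have key : ∀ x y₀ y₁ y₂ : Fin 4,
      dSalg.join (dSalg.meet (dSalg.star x) y₀)
        (dSalg.join (dSalg.meet (dSalg.meet (dSalg.star (dSalg.star x)) (dSalg.plus x)) y₁)
          (dSalg.meet (dSalg.star (dSalg.plus x)) y₂)) =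
        (![y₀, y₁, y₂] : Fin 3 → Fin 4) (cls x) := by
    unfold dSalg; decide
  refine (key (ev u p q) (ev (t 0) p q) (ev (t 1) p q) (ev (t 2) p q)).trans ?_
  generalize cls (ev u p q) = i
  fin_cases i <;> rfl

/-- The six lattice functions can be prescribed independently on the nine blocks. -/
lemma exists_term (k : Fin 3 × Fin 3 → Fin 6) :
    ∃ t, ∀ p q, ev t p q = rep (k (cls p, cls q)) p q := by
  refine ⟨sel (.var 0) fun i => sel (.var 1) fun j => repTerm (k (i, j)), fun p q => ?_⟩
  rw [eval_sel, eval_sel, ev_repTerm]; rfl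

/-- A class of terms, sent to the family of its restrictions to the blocks. -/
def toLocals : Quotient freeDS2Setoid → (c : Fin 3 × Fin 3) → locals c :=
  Quotient.lift (fun t c => ⟨restrict c (ev t), restrict_mem c t⟩) fun t s h => by
    have h' : ev t = ev s := funext fun p => funext fun q => h ![p, q]
    simp only [h']

lemma toLocals_bijective : Function.Bijective toLocals := by
  constructor
  · intro x y
    induction x, y using Quotient.inductionOn₂ with
    | h t s =>
      intro h
      refine Quotient.sound fun v => ?_
      have hv : v = ![v 0, v 1] := by ext i; fin_cases i <;> rfl
      have h1 := congrFun (congrFun (congrArg Subtype.val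
        (congrFun h (cls (v 0), cls (v 1)))) (v 0)) (v 1)
      have h2 : ev t (v 0) (v 1) = ev s (v 0) (v 1) := by
        simpa [toLocals, restrict] using h1
      rw [hv]; exact h2
  · intro g
    have hg : ∀ c, ∃ k, restrict c (rep k) = (g c).1 := fun c => by
      simpa [locals] using (g c).2
    choose k hk using hg
    obtain ⟨t, ht⟩ := exists_term k
    refine ⟨Quotient.mk _ t, funext fun c => Subtype.ext ?_⟩
    rw [← hk c]
    funext p q
    change restrict c (ev t) p q = _
    unfold restrict
    split_ifs with h
    · rw [ht, h]
    · rfl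

lemma prod_card_locals : ∏ c, (locals c).card = 7776 := by decide +kernel

end FreeDS2

/-- The free double Stone algebra on two generators has exactly 7776 elements. -/
theorem statement16 : Nat.card (Quotient freeDS2Setoid) = 7776 := by
  rw [Nat.card_congr (Equiv.ofBijective _ FreeDS2.toLocals_bijective), Nat.card_eq_fintype_card,
    Fintype.card_pi]
  simpa using FreeDS2.prod_card_locals
end
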